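/- Assume the string equation hypothesis holds for F_0, …, F_g. Then for all integers s ≥ 0, m ≥ 1, every coordinate entry W = τ_p(γ_x) with descendent level p ≥ 1, and all coordinate entries V_1, …, V_s, one has Ψ_{2,s,g,m}(W S | V_1 ⋯ V_s) = −Ψ_{1,s,g,m−1}(W | V_1 ⋯ V_s) + Ψ_{1,s,g,m}(τ_−(W) | V_1 ⋯ V_s), where the entry S is expanded by R-multilinearity of Ψ. -/

import Mathlib

open scoped BigOperators

namespace GWBigPhase

/-- The big phase space coefficient ring: formal power series over `ℚ` in the
variables `t_n^α`, indexed by pairs `(n, α) : ℕ × Fin N`. -/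
abbrev R (N : ℕ) : Type := MvPowerSeries (ℕ × Fin N) ℚ

/-- Partial derivative of a multivariate power series with respect to the
variable indexed by `i`. -/
noncomputable def pderiv (N : ℕ) (i : ℕ × Fin N) (f : R N) : R N :=
  fun e => ((e i : ℚ) + 1) * MvPowerSeries.coeff (R := ℚ) (e + Finsupp.single i 1) f

/-- Coefficientwise (formally convergent) sum of a family of power series. -/
noncomputable def seriesSum (N : ℕ) (f : ℕ × Fin N → R N) : R N :=
  fun e => ∑ᶠ p : ℕ × Fin N, MvPowerSeries.coeff (R := ℚ) e (f p)

/-- The bracket `⟨⟨τ_{n_1}(γ_{α_1}) ⋯ τ_{n_k}(γ_{α_k})⟩⟩_h`: iterated partial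
derivative of `F h`, and `0` whenever some descendent level is negative. -/
noncomputable def Bracket (N : ℕ) (F : ℕ → R N) (h : ℕ) : List (ℤ × Fin N) → R N
  | [] => F h
  | (n, α) :: L => if 0 ≤ n then pderiv N (n.toNat, α) (Bracket N F h L) else 0

/-- `t̃_n^α = t_n^α − δ_{α,1} δ_{n,1}` (the distinguished index `1` is `0 : Fin N`). -/
noncomputable def ttilde (N : ℕ) [NeZero N] (n : ℕ) (α : Fin N) : R N :=
  MvPowerSeries.X (n, α) - if n = 1 ∧ α = 0 then 1 else 0

/-- Interpret a list of coordinate entries `τ_n(γ_α)` with `n : ℕ` as entries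
with integer descendent levels. -/
def coordList (N : ℕ) (L : List (ℕ × Fin N)) : List (ℤ × Fin N) :=
  L.map (fun p => ((p.1 : ℤ), p.2))

/-- Lower the descendent level of the `i`-th entry of a list by one (the
operator `τ_-` applied in the `i`-th slot). -/
def lowerAt (N : ℕ) (L : List (ℤ × Fin N)) (i : ℕ) : List (ℤ × Fin N) :=
  L.mapIdx (fun j p => if j = i then (p.1 - 1, p.2) else p)

/-- The quantity `Ψ_{r,s,g,m}(W_1 ⋯ W_r | V_1 ⋯ V_s)`, where `r = Ws.length`
and `s = Vs.length`. -/
noncomputable def Psi (N : ℕ) [NeZero N] (ηinv : Matrix (Fin N) (Fin N) ℚ)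
    (F : ℕ → R N) (g m : ℕ) (Ws Vs : List (ℤ × Fin N)) : R N :=
  (∑ k ∈ Finset.range (m + 1), ∑ g1 ∈ Finset.range (g + 1),
      ∑ α : Fin N, ∑ β : Fin N,
        (-1 : R N) ^ k * MvPowerSeries.C (σ := ℕ × Fin N) (R := ℚ) (ηinv α β) *
          Bracket N F g1 (((k : ℤ), α) :: Ws) *
          Bracket N F (g - g1) ((((m - k : ℕ) : ℤ), β) :: Vs))
  - (match Ws with
     | [] => seriesSum N (fun p =>
         ttilde N p.1 p.2 * Bracket N F g (((p.1 : ℤ) + (m : ℤ) + 1, p.2) :: Vs))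
     | [w] => Bracket N F g ((w.1 + (m : ℤ) + 1, w.2) :: Vs)
     | _ => 0)
  + (-1 : R N) ^ (m + 1) *
    (match Vs with
     | [] => seriesSum N (fun p =>
         ttilde N p.1 p.2 * Bracket N F g (((p.1 : ℤ) + (m : ℤ) + 1, p.2) :: Ws))
     | [v] => Bracket N F g (Ws ++ [(v.1 + (m : ℤ) + 1, v.2)])
     | _ => 0)

/-- `Ψ_{r+1,s,g,m}(W_1 ⋯ W_r S | V_1 ⋯ V_s)`: the value of `Ψ` with the string
vector field `S = −Σ_{n,α} t̃_n^α τ_{n−1}(γ_α)` inserted as the last `W`-entry,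
expanded by `R`-multilinearity of `Ψ`. -/
noncomputable def PsiS (N : ℕ) [NeZero N] (ηinv : Matrix (Fin N) (Fin N) ℚ)
    (F : ℕ → R N) (g m : ℕ) (Ws Vs : List (ℤ × Fin N)) : R N :=
  - seriesSum N (fun p =>
      ttilde N p.1 p.2 * Psi N ηinv F g m (Ws ++ [((p.1 : ℤ) - 1, p.2)]) Vs)

/-- The string equation hypothesis for `F_0, …, F_g`. -/
def StringEqHyp (N : ℕ) [NeZero N] (η : Matrix (Fin N) (Fin N) ℚ)
    (F : ℕ → R N) (g : ℕ) : Prop :=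
  ∀ h : ℕ, h ≤ g →
    pderiv N ((0 : ℕ), (0 : Fin N)) (F h) =
      seriesSum N (fun p => MvPowerSeries.X (p.1 + 1, p.2) * pderiv N p (F h)) +
      (if h = 0 then
        MvPowerSeries.C (σ := ℕ × Fin N) (R := ℚ) (1 / 2) *
          ∑ α : Fin N, ∑ β : Fin N,
            MvPowerSeries.C (σ := ℕ × Fin N) (R := ℚ) (η α β) *
              MvPowerSeries.X ((0 : ℕ), α) * MvPowerSeries.X ((0 : ℕ), β)
       else 0)

/-!
The string vector field acts on `R` as an operator `S` whose commutator with the derivative along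
`τ_n(γ_α)` is the derivative along `τ_{n-1}(γ_α)`. Inserting the string vector field into a bracket
applies `S` to that bracket, and moving `S` inwards past an entry adds a term with that entry
lowered. In the quadratic part of `Ψ_{m+1}` the entry passed is `τ_k`, and reindexing `k` turns
the extra terms into the quadratic part of `Ψ_m`; in the correction term attached to the `V_j` it
is `τ_{m+2}(V_1)` (or its analogue for `s = 0`), which leaves the correction term of `Ψ_m`. All this
holds for arbitrary `F`. The string equation says that `S F_h` is a polynomial in the `t_0^α`, so
it is killed by the derivative along `W`, and `S` turns `⟨⟨W⟩⟩_h` into `⟨⟨τ_-(W)⟩⟩_h`.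
-/

section PowerSeries

variable {σ 𝕜 : Type*} [CommSemiring 𝕜]

lemma mvPowerSeries_pderiv_comm (i j : σ) (f : MvPowerSeries σ 𝕜) :
    MvPowerSeries.pderiv 𝕜 i (MvPowerSeries.pderiv 𝕜 j f) =
      MvPowerSeries.pderiv 𝕜 j (MvPowerSeries.pderiv 𝕜 i f) := by
  rcases eq_or_ne i j with rfl | hij
  · rfl
  ext e
  simp only [MvPowerSeries.coeff_pderiv, Finsupp.add_apply, Finsupp.single_eq_of_ne hij,
    Finsupp.single_eq_of_ne hij.symm, add_zero, add_right_comm e (Finsupp.single i 1)]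
  ring

lemma coeff_X_mul_eq_zero {e : σ →₀ ℕ} {i : σ} (hi : i ∉ e.support) (f : MvPowerSeries σ 𝕜) :
    MvPowerSeries.coeff e (MvPowerSeries.X i * f) = 0 := by
  rw [MvPowerSeries.X, MvPowerSeries.coeff_monomial_mul, if_neg]
  intro hle
  simpa [Finsupp.notMem_support_iff.mp hi] using hle i

end PowerSeries

section Brackets

variable {N : ℕ}

lemma pderiv_eq_mvPowerSeries_pderiv (i : ℕ × Fin N) (f : R N) :
    pderiv N i f = MvPowerSeries.pderiv ℚ i f := by
  ext e
  rw [MvPowerSeries.coeff_pderiv, mul_comm]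
  rfl

/-- The derivative along the coordinate entry `τ_n(γ_α)`, where `a = (n, α)`. As in brackets, an
entry of negative level is zero. -/
noncomputable def levelDeriv (a : ℤ × Fin N) : Derivation ℚ (R N) (R N) :=
  if 0 ≤ a.1 then MvPowerSeries.pderiv ℚ (a.1.toNat, a.2) else 0

lemma levelDeriv_natCast (n : ℕ) (α : Fin N) :
    levelDeriv ((n : ℤ), α) = MvPowerSeries.pderiv ℚ (n, α) := by
  simp [levelDeriv]

lemma levelDeriv_of_neg {a : ℤ × Fin N} (ha : a.1 < 0) : levelDeriv a = 0 :=
  if_neg (not_le.mpr ha)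

lemma levelDeriv_comm (a b : ℤ × Fin N) (f : R N) :
    levelDeriv a (levelDeriv b f) = levelDeriv b (levelDeriv a f) := by
  unfold levelDeriv
  split_ifs <;> simp [mvPowerSeries_pderiv_comm (a.1.toNat, a.2)]

lemma Bracket_cons (F : ℕ → R N) (h : ℕ) (a : ℤ × Fin N) (L : List (ℤ × Fin N)) :
    Bracket N F h (a :: L) = levelDeriv a (Bracket N F h L) := by
  obtain ⟨n, α⟩ := a
  by_cases hn : 0 ≤ n <;> simp [Bracket, levelDeriv, hn, pderiv_eq_mvPowerSeries_pderiv]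

lemma Bracket_append_singleton (F : ℕ → R N) (h : ℕ) (L : List (ℤ × Fin N)) (a : ℤ × Fin N) :
    Bracket N F h (L ++ [a]) = levelDeriv a (Bracket N F h L) := by
  induction L with
  | nil => exact Bracket_cons F h a []
  | cons b L ih => rw [List.cons_append, Bracket_cons, ih, levelDeriv_comm, ← Bracket_cons]

end Brackets

section WeightedSums

variable {N : ℕ}

lemma coeff_seriesSum_X_mul {e : ℕ × Fin N →₀ ℕ} {s : Finset (ℕ × Fin N)} (hs : e.support ⊆ s)
    (f : ℕ × Fin N → R N) :
    MvPowerSeries.coeff e (seriesSum N fun q => MvPowerSeries.X q * f q) =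
      MvPowerSeries.coeff e (∑ q ∈ s, MvPowerSeries.X q * f q) := by
  rw [map_sum]
  refine finsum_eq_sum_of_support_subset _ fun q hq => ?_
  by_contra hqs
  exact hq (coeff_X_mul_eq_zero (fun hqe => hqs (hs hqe)) _)

lemma coeff_mul_seriesSum_X_mul (e : ℕ × Fin N →₀ ℕ) (c : R N) (f : ℕ × Fin N → R N) :
    MvPowerSeries.coeff e (c * seriesSum N fun q => MvPowerSeries.X q * f q) =
      MvPowerSeries.coeff e (c * ∑ q ∈ e.support, MvPowerSeries.X q * f q) := by
  classical
  simp only [MvPowerSeries.coeff_mul]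
  refine Finset.sum_congr rfl fun d hd => ?_
  have hle : d.2 ≤ e := Finset.HasAntidiagonal.mem_antidiagonal.mp hd ▸ le_add_self
  rw [coeff_seriesSum_X_mul (Finsupp.support_mono hle)]

/-- The formal sum `∑_{n,α} t_n^α f_{n,α}`, as an `R`-linear operator on families of series. -/
noncomputable def varSum : (ℕ × Fin N → R N) →ₗ[R N] R N where
  toFun f := seriesSum N fun q => MvPowerSeries.X q * f q
  map_add' f f' := by
    ext e
    simp only [map_add, coeff_seriesSum_X_mul subset_rfl]
    simp only [Pi.add_apply, mul_add, Finset.sum_add_distrib, map_add]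
  map_smul' c f := by
    ext e
    rw [coeff_seriesSum_X_mul subset_rfl, RingHom.id_apply, smul_eq_mul,
      coeff_mul_seriesSum_X_mul, Finset.mul_sum]
    simp only [Pi.smul_apply, smul_eq_mul, mul_left_comm]

lemma varSum_apply (f : ℕ × Fin N → R N) :
    varSum f = seriesSum N fun q => MvPowerSeries.X q * f q := rfl

lemma varSum_comm (f : ℕ × Fin N → ℕ × Fin N → R N) :
    (varSum fun q => varSum fun r => f q r) = varSum fun r => varSum fun q => f q r := by
  ext e
  simp only [varSum_apply, coeff_seriesSum_X_mul (subset_refl e.support), map_sum,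
    coeff_mul_seriesSum_X_mul, Finset.mul_sum]
  rw [Finset.sum_comm]
  simp only [mul_left_comm]

lemma pderiv_varSum (i : ℕ × Fin N) (f : ℕ × Fin N → R N) :
    MvPowerSeries.pderiv ℚ i (varSum f) =
      f i + varSum fun q => MvPowerSeries.pderiv ℚ i (f q) := by
  classical
  ext e
  have hle : e ≤ e + Finsupp.single i 1 := le_self_add
  have hi : i ∈ (e + Finsupp.single i 1).support := by simp
  rw [MvPowerSeries.coeff_pderiv, varSum_apply, coeff_seriesSum_X_mul subset_rfl,
    ← MvPowerSeries.coeff_pderiv, map_add, varSum_apply,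
    coeff_seriesSum_X_mul (Finsupp.support_mono hle), ← map_add, map_sum]
  simp only [Derivation.leibniz, MvPowerSeries.pderiv_X, smul_eq_mul, Pi.single_apply, mul_ite,
    mul_one, mul_zero, Finset.sum_add_distrib, Finset.sum_ite_eq', hi, if_true, add_comm]

lemma seriesSum_X_mul_comp {e : ℕ × Fin N → ℕ × Fin N} (he : Function.Injective e)
    {f : ℕ × Fin N → R N} (hf : ∀ q ∉ Set.range e, f q = 0) :
    (seriesSum N fun q => MvPowerSeries.X (e q) * f (e q)) = varSum f := by
  classical
  ext d
  have hrange : (∑ᶠ q ∈ Set.range e, MvPowerSeries.coeff d (MvPowerSeries.X q * f q)) =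
      ∑ᶠ q, MvPowerSeries.coeff d (MvPowerSeries.X q * f q) := by
    refine finsum_congr fun q => ?_
    by_cases hq : q ∈ Set.range e
    · rw [finsum_eq_if, if_pos hq]
    · rw [finsum_eq_if, if_neg hq, hf q hq, mul_zero, map_zero]
  exact (finsum_mem_range he).symm.trans hrange

variable [NeZero N]

/-- The formal sum `∑_{n,α} t̃_n^α f_{n,α}`, as an `R`-linear operator on families of series. -/
noncomputable def ttildeSum : (ℕ × Fin N → R N) →ₗ[R N] R N :=
  varSum - LinearMap.proj (1, 0)

lemma ttildeSum_apply (f : ℕ × Fin N → R N) : ttildeSum f = varSum f - f (1, 0) := rfl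

lemma seriesSum_ttilde_mul (f : ℕ × Fin N → R N) :
    (seriesSum N fun q => ttilde N q.1 q.2 * f q) = ttildeSum f := by
  have hone (q : ℕ × Fin N) : (q.1 = 1 ∧ q.2 = 0) ↔ q = (1, 0) :=
    (Prod.ext_iff (y := (1, 0))).symm
  ext e
  have hsub : (Function.support fun q => MvPowerSeries.coeff e (ttilde N q.1 q.2 * f q)) ⊆
      (insert (1, 0) e.support : Finset (ℕ × Fin N)) := by
    intro q hq
    by_contra hqe
    rw [Finset.mem_coe, Finset.mem_insert, not_or] at hqe
    refine hq ?_
    simpa only [ttilde, hone, if_neg hqe.1, sub_zero] using coeff_X_mul_eq_zero hqe.2 (f q)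
  rw [ttildeSum_apply, map_sub, varSum_apply, coeff_seriesSum_X_mul (Finset.subset_insert (1, 0) _),
    ← map_sub]
  refine (finsum_eq_sum_of_support_subset _ hsub).trans ?_
  simp only [← map_sum, ttilde, hone, sub_mul, ite_mul, one_mul, zero_mul, Finset.sum_sub_distrib,
    Finset.sum_ite_eq', Finset.mem_insert_self, if_true]

lemma ttildeSum_const_mul (c : R N) (f : ℕ × Fin N → R N) :
    (ttildeSum fun q => c * f q) = c * ttildeSum f :=
  ttildeSum.map_smul c f

lemma ttildeSum_add (f f' : ℕ × Fin N → R N) :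
    (ttildeSum fun q => f q + f' q) = ttildeSum f + ttildeSum f' :=
  map_add ttildeSum f f'

lemma ttildeSum_sum {ι : Type*} (s : Finset ι) (f : ι → ℕ × Fin N → R N) :
    (ttildeSum fun q => ∑ i ∈ s, f i q) = ∑ i ∈ s, ttildeSum (f i) := by
  rw [← map_sum, Finset.sum_fn]

lemma ttildeSum_comm (f : ℕ × Fin N → ℕ × Fin N → R N) :
    (ttildeSum fun q => ttildeSum fun r => f q r) =
      ttildeSum fun r => ttildeSum fun q => f q r := by
  have hsub (f f' : ℕ × Fin N → R N) : (varSum fun q => f q - f' q) = varSum f - varSum f' :=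
    map_sub varSum f f'
  simp only [ttildeSum_apply, hsub]
  rw [varSum_comm]
  ring

lemma pderiv_ttildeSum (i : ℕ × Fin N) (f : ℕ × Fin N → R N) :
    MvPowerSeries.pderiv ℚ i (ttildeSum f) =
      f i + ttildeSum fun q => MvPowerSeries.pderiv ℚ i (f q) := by
  simp only [ttildeSum_apply, map_sub, pderiv_varSum, add_sub_assoc]

end WeightedSums

section StringOperator

variable {N : ℕ} [NeZero N]

/-- The action on `R` of the string vector field `S = -∑_{n,α} t̃_n^α τ_{n-1}(γ_α)`. -/
noncomputable def stringOp (f : R N) : R N :=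
  -ttildeSum fun q => levelDeriv ((q.1 : ℤ) - 1, q.2) f

lemma stringOp_levelDeriv (a : ℤ × Fin N) (f : R N) :
    stringOp (levelDeriv a f) = levelDeriv a (stringOp f) + levelDeriv (a.1 - 1, a.2) f := by
  obtain ⟨n, α⟩ := a
  simp only [stringOp, map_neg, levelDeriv_comm _ (n, α)]
  rcases lt_or_ge n 0 with hn | hn
  · have hn' : n - 1 < 0 := by omega
    have hzero : (fun _ => 0 : ℕ × Fin N → R N) = 0 := rfl
    simp [levelDeriv_of_neg (a := (n, α)) hn, levelDeriv_of_neg (a := (n - 1, α)) hn', hzero]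
  · lift n to ℕ using hn
    simp only [levelDeriv_natCast n, pderiv_ttildeSum]
    ring

lemma ttildeSum_levelDeriv_levelDeriv (a : ℤ × Fin N) (f : R N) :
    (ttildeSum fun q => levelDeriv a (levelDeriv ((q.1 : ℤ) - 1, q.2) f)) =
      -(levelDeriv a (stringOp f) + levelDeriv (a.1 - 1, a.2) f) := by
  rw [← stringOp_levelDeriv, stringOp, neg_neg]
  simp only [levelDeriv_comm a]

lemma stringOp_eq (f : R N) :
    stringOp f = pderiv N (0, 0) f -
      seriesSum N fun q => MvPowerSeries.X (q.1 + 1, q.2) * pderiv N q f := by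
  have hshift : (seriesSum N fun q => MvPowerSeries.X (q.1 + 1, q.2) * pderiv N q f) =
      varSum fun q => levelDeriv ((q.1 : ℤ) - 1, q.2) f := by
    have hinj : Function.Injective fun q : ℕ × Fin N => (q.1 + 1, q.2) :=
      (add_left_injective 1).prodMap Function.injective_id
    rw [← seriesSum_X_mul_comp hinj]
    · simp [pderiv_eq_mvPowerSeries_pderiv, levelDeriv_natCast]
    · rintro ⟨_ | n, α⟩ hq
      · simp [levelDeriv_of_neg]
      · exact absurd ⟨(n, α), rfl⟩ hq
  rw [hshift, stringOp, ttildeSum_apply, neg_sub, pderiv_eq_mvPowerSeries_pderiv,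
    ← levelDeriv_natCast]
  simp

variable {η : Matrix (Fin N) (Fin N) ℚ} {F : ℕ → R N} {g h : ℕ}

lemma StringEqHyp.levelDeriv_stringOp (hstring : StringEqHyp N η F g) (hh : h ≤ g)
    {w : ℤ × Fin N} (hw : w.1 ≠ 0) : levelDeriv w (stringOp (F h)) = 0 := by
  obtain ⟨n, x⟩ := w
  rcases lt_or_ge n 0 with hn | hn
  · rw [levelDeriv_of_neg hn, Derivation.zero_apply]
  lift n to ℕ using hn
  have hX (α : Fin N) :
      MvPowerSeries.pderiv ℚ (n, x) (MvPowerSeries.X ((0 : ℕ), α) : R N) = 0 :=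
    MvPowerSeries.pderiv_X_of_ne fun heq => hw (by simpa using (congrArg Prod.fst heq).symm)
  rw [stringOp_eq, hstring h hh, add_sub_cancel_left, levelDeriv_natCast]
  split_ifs
  · simp [Derivation.leibniz, hX, map_sum]
  · exact map_zero _

lemma StringEqHyp.stringOp_Bracket_singleton (hstring : StringEqHyp N η F g) (hh : h ≤ g)
    {w : ℤ × Fin N} (hw : w.1 ≠ 0) :
    stringOp (Bracket N F h [w]) = Bracket N F h [(w.1 - 1, w.2)] := by
  simp only [Bracket_cons, stringOp_levelDeriv]
  rw [Bracket, hstring.levelDeriv_stringOp hh hw, zero_add]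

end StringOperator

section Psi

variable {N : ℕ}

/-- The quadratic part of `Ψ_{r,s,g,m}`, for families `A` and `B` in place of the genus-`h`
brackets `⟨⟨W_1 ⋯ W_r⟩⟩_h` and `⟨⟨V_1 ⋯ V_s⟩⟩_h`, and any matrix `c` in place of `(η^{αβ})`. -/
noncomputable def quadraticPart (c : Matrix (Fin N) (Fin N) ℚ) (g m : ℕ) (A B : ℕ → R N) :
    R N :=
  ∑ k ∈ Finset.range (m + 1), ∑ g1 ∈ Finset.range (g + 1), ∑ α : Fin N, ∑ β : Fin N,
    (-1 : R N) ^ k * MvPowerSeries.C (σ := ℕ × Fin N) (R := ℚ) (c α β) *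
      levelDeriv ((k : ℤ), α) (A g1) * levelDeriv (((m - k : ℕ) : ℤ), β) (B (g - g1))

lemma quadraticPart_congr (c : Matrix (Fin N) (Fin N) ℚ) {g : ℕ} (m : ℕ) {A A' : ℕ → R N}
    (hA : ∀ h ≤ g, A h = A' h) (B : ℕ → R N) :
    quadraticPart c g m A B = quadraticPart c g m A' B := by
  refine Finset.sum_congr rfl fun k _ => Finset.sum_congr rfl fun g1 hg1 => ?_
  rw [hA g1 (Nat.lt_succ_iff.mp (Finset.mem_range.mp hg1))]

lemma neg_quadraticPart_eq (c : Matrix (Fin N) (Fin N) ℚ) (g m : ℕ) (A B : ℕ → R N) :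
    -quadraticPart c g m A B =
      ∑ k ∈ Finset.range (m + 2), ∑ g1 ∈ Finset.range (g + 1), ∑ α : Fin N, ∑ β : Fin N,
        (-1 : R N) ^ k * MvPowerSeries.C (σ := ℕ × Fin N) (R := ℚ) (c α β) *
          levelDeriv ((k : ℤ) - 1, α) (A g1) *
          levelDeriv (((m + 1 - k : ℕ) : ℤ), β) (B (g - g1)) := by
  have hneg (α : Fin N) : levelDeriv (((0 : ℕ) : ℤ) - 1, α) = 0 := levelDeriv_of_neg (by simp)
  rw [Finset.sum_range_succ']
  simp only [hneg, Derivation.zero_apply, mul_zero, zero_mul, Finset.sum_const_zero, add_zero,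
    Nat.cast_add, Nat.cast_one, add_sub_cancel_right, Nat.add_sub_add_right, quadraticPart,
    pow_succ, mul_neg, mul_one, neg_mul, Finset.sum_neg_distrib]

variable [NeZero N]

lemma ttildeSum_quadraticPart (c : Matrix (Fin N) (Fin N) ℚ) (g m : ℕ) (A B : ℕ → R N) :
    (ttildeSum fun q =>
        quadraticPart c g (m + 1) (fun h => levelDeriv ((q.1 : ℤ) - 1, q.2) (A h)) B) =
      quadraticPart c g m A B -
        quadraticPart c g (m + 1) (fun h => stringOp (A h)) B := by
  rw [← neg_neg (quadraticPart c g m A B), neg_quadraticPart_eq]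
  simp only [quadraticPart, ttildeSum_sum, ← Finset.sum_neg_distrib, ← Finset.sum_sub_distrib]
  refine Finset.sum_congr rfl fun k _ => Finset.sum_congr rfl fun g1 _ =>
    Finset.sum_congr rfl fun α _ => Finset.sum_congr rfl fun β _ => ?_
  simp only [mul_right_comm _ (levelDeriv ((k : ℤ), α) _), ttildeSum_const_mul,
    ttildeSum_levelDeriv_levelDeriv]
  ring

/-- The correction term of `Ψ_{r,s,g,m}` attached to the entries `V_1, …, V_s`, without its sign
and with a series `f` in place of the bracket `⟨⟨W_1 ⋯ W_r⟩⟩_g`. -/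
noncomputable def rightCorrection (m : ℕ) (Vs : List (ℤ × Fin N)) (f : R N) : R N :=
  match Vs with
  | [] => ttildeSum fun r => levelDeriv ((r.1 : ℤ) + (m : ℤ) + 1, r.2) f
  | [v] => levelDeriv (v.1 + (m : ℤ) + 1, v.2) f
  | _ => 0

lemma ttildeSum_rightCorrection (m : ℕ) (Vs : List (ℤ × Fin N)) (f : R N) :
    (ttildeSum fun q => rightCorrection (m + 1) Vs (levelDeriv ((q.1 : ℤ) - 1, q.2) f)) =
      -(rightCorrection (m + 1) Vs (stringOp f) + rightCorrection m Vs f) := by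
  have hlevel (n : ℤ) : n + ((m + 1 : ℕ) : ℤ) + 1 - 1 = n + m + 1 := by push_cast; ring
  match Vs with
  | [] =>
    simp only [rightCorrection]
    rw [ttildeSum_comm, ← ttildeSum_add, ← map_neg]
    simp only [ttildeSum_levelDeriv_levelDeriv, hlevel]
    rfl
  | [v] => simp only [rightCorrection, ttildeSum_levelDeriv_levelDeriv, hlevel]
  | _ :: _ :: _ =>
    simp only [rightCorrection, add_zero, neg_zero]
    exact map_zero ttildeSum

variable (c : Matrix (Fin N) (Fin N) ℚ) (F : ℕ → R N) (g m : ℕ)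

lemma Psi_singleton (w : ℤ × Fin N) (Vs : List (ℤ × Fin N)) :
    Psi N c F g m [w] Vs =
      quadraticPart c g m (fun h => Bracket N F h [w]) (fun h => Bracket N F h Vs) -
        Bracket N F g ((w.1 + (m : ℤ) + 1, w.2) :: Vs) +
        (-1) ^ (m + 1) * rightCorrection m Vs (Bracket N F g [w]) := by
  rcases Vs with _ | ⟨v, _ | ⟨v', Vs⟩⟩ <;>
    simp only [Psi, quadraticPart, rightCorrection, seriesSum_ttilde_mul,
      Bracket_append_singleton, Bracket_cons]

lemma Psi_append_singleton {Ws : List (ℤ × Fin N)} (hWs : Ws ≠ []) (a : ℤ × Fin N)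
    (Vs : List (ℤ × Fin N)) :
    Psi N c F g m (Ws ++ [a]) Vs =
      quadraticPart c g m (fun h => levelDeriv a (Bracket N F h Ws))
          (fun h => Bracket N F h Vs) +
        (-1) ^ (m + 1) * rightCorrection m Vs (levelDeriv a (Bracket N F g Ws)) := by
  obtain ⟨w, b, L, hL⟩ : ∃ w b L, Ws ++ [a] = w :: b :: L := by
    rcases Ws with _ | ⟨w, _ | ⟨b, L⟩⟩
    exacts [absurd rfl hWs, ⟨w, a, [], rfl⟩, ⟨w, b, L ++ [a], rfl⟩]
  simp only [← Bracket_append_singleton, hL]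
  rcases Vs with _ | ⟨v, _ | ⟨v', Vs⟩⟩ <;>
    simp only [Psi, quadraticPart, rightCorrection, seriesSum_ttilde_mul, sub_zero,
      Bracket_append_singleton, Bracket_cons]

lemma PsiS_succ {Ws : List (ℤ × Fin N)} (hWs : Ws ≠ []) (Vs : List (ℤ × Fin N)) :
    PsiS N c F g (m + 1) Ws Vs =
      quadraticPart c g (m + 1) (fun h => stringOp (Bracket N F h Ws))
          (fun h => Bracket N F h Vs) -
        quadraticPart c g m (fun h => Bracket N F h Ws) (fun h => Bracket N F h Vs) +
        (-1) ^ m * (rightCorrection (m + 1) Vs (stringOp (Bracket N F g Ws)) +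
          rightCorrection m Vs (Bracket N F g Ws)) := by
  simp only [PsiS, seriesSum_ttilde_mul, Psi_append_singleton _ _ _ _ hWs, ttildeSum_add,
    ttildeSum_const_mul, ttildeSum_quadraticPart, ttildeSum_rightCorrection]
  ring

end Psi

theorem psi_two_string_descendent_general {N : ℕ} [NeZero N]
    {η : Matrix (Fin N) (Fin N) ℚ} (c : Matrix (Fin N) (Fin N) ℚ) {F : ℕ → R N} {g : ℕ}
    (hstring : StringEqHyp N η F g) (m : ℕ) {w : ℤ × Fin N} (hw : w.1 ≠ 0)
    (Vs : List (ℤ × Fin N)) :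
    PsiS N c F g (m + 1) [w] Vs =
      -Psi N c F g m [w] Vs + Psi N c F g (m + 1) [(w.1 - 1, w.2)] Vs := by
  have hlevel : w.1 - 1 + ((m + 1 : ℕ) : ℤ) + 1 = w.1 + m + 1 := by push_cast; ring
  rw [PsiS_succ c F g m (List.cons_ne_nil w []), Psi_singleton, Psi_singleton, hlevel,
    quadraticPart_congr c (m + 1) fun h hh => hstring.stringOp_Bracket_singleton hh hw,
    hstring.stringOp_Bracket_singleton le_rfl hw]
  ring

/-- For `s ≥ 0`, `m ≥ 1`, a coordinate entry `W = τ_p(γ_x)` of positive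
descendent level `p ≥ 1`, and coordinate entries `V_1, …, V_s`:
`Ψ_{2,s,g,m}(W S | V) = −Ψ_{1,s,g,m−1}(W | V) + Ψ_{1,s,g,m}(τ_−(W) | V)`. -/
theorem psi_two_string_descendent (N : ℕ) [NeZero N]
    (η ηinv : Matrix (Fin N) (Fin N) ℚ)
    (hηsymm : ∀ α β, η α β = η β α)
    (hinv : η * ηinv = 1) (hinv' : ηinv * η = 1)
    (g : ℕ) (F : ℕ → R N) (hstring : StringEqHyp N η F g)
    (s m : ℕ) (hm : 1 ≤ m)
    (p : ℕ) (hp : 1 ≤ p) (x : Fin N)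
    (Vs : List (ℕ × Fin N)) (hVs : Vs.length = s) :
    PsiS N ηinv F g m [((p : ℤ), x)] (coordList N Vs) =
      - Psi N ηinv F g (m - 1) [((p : ℤ), x)] (coordList N Vs)
      + Psi N ηinv F g m [((p : ℤ) - 1, x)] (coordList N Vs) := by
  obtain ⟨m, rfl⟩ := Nat.exists_eq_add_of_le' hm
  exact psi_two_string_descendent_general ηinv hstring m (w := (p, x))
    (Nat.cast_ne_zero.mpr (Nat.one_le_iff_ne_zero.mp hp)) (coordList N Vs)

end GWBigPhase
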